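/- Let F(x) = ∑_{n=2}^∞ τ(n) e(p_n³ x) / (n² (log n)^{2023}) for x ∈ ℝ, where the series converges absolutely and uniformly. Then for every x₀ ∈ ℝ there do not exist constants C > 0 and δ > 0 such that |F(x) − F(x₀)| ≤ C|x − x₀| for all x with |x − x₀| < δ; in particular, F is not differentiable at any point of ℝ. -/

import Mathlib

open Real

/-- `e(x) = e^{2πix}`. -/
noncomputable def e (x : ℝ) : ℂ := Complex.exp (2 * π * Complex.I * x)

/-- `F(x) = ∑_{n=2}^∞ τ(n) e(pₙ³ x) / (n² (log n)^2023)`, where `pₙ` is the `n`-th prime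
(`Nat.nth Nat.Prime (n-1)`) and `τ(n)` the number of divisors of `n`. -/
noncomputable def F (x : ℝ) : ℂ :=
  ∑' n : ℕ, ((n + 2).divisors.card : ℂ) * e ((Nat.nth Nat.Prime (n + 1) : ℝ)^3 * x) /
    (((n : ℂ) + 2)^2 * ((Real.log ((n : ℝ) + 2) : ℂ))^2023)

lemma e_eq_exp_ofReal_mul_I (x : ℝ) : e x = Complex.exp ((2 * π * x : ℝ) * Complex.I) := by
  rw [e]; congr 1; push_cast; ring

lemma norm_e (x : ℝ) : ‖e x‖ = 1 := by
  rw [e_eq_exp_ofReal_mul_I, Complex.norm_exp_ofReal_mul_I]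

lemma e_add (x y : ℝ) : e (x + y) = e x * e y := by
  rw [e, e, e, ← Complex.exp_add]; congr 1; push_cast; ring

lemma e_zero : e 0 = 1 := by simp [e]

lemma e_nat_mul (n : ℕ) (x : ℝ) : e (n * x) = e x ^ n := by
  rw [e, e, ← Complex.exp_nat_mul]; congr 1; push_cast; ring

lemma conj_e (x : ℝ) : (starRingEnd ℂ) (e x) = e (-x) := by
  rw [e_eq_exp_ofReal_mul_I, e_eq_exp_ofReal_mul_I, ← Complex.exp_conj, map_mul,
    Complex.conj_ofReal, Complex.conj_I]
  congr 1; push_cast; ring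

lemma continuous_e : Continuous e := by
  unfold e; fun_prop

lemma four_mul_abs_le_norm_e_sub_one {t : ℝ} (ht : |t| ≤ 1 / 2) : 4 * |t| ≤ ‖e t - 1‖ := by
  have h1 : ‖e t - 1‖ = 2 * |sin (π * t)| := by
    have := Complex.norm_exp_I_mul_ofReal_sub_one (2 * π * t)
    rw [e_eq_exp_ofReal_mul_I, mul_comm, this, Real.norm_eq_abs, abs_mul, abs_two]
    congr 3; ring
  have h2 : |π * t| ≤ π / 2 := by
    rw [abs_mul, abs_of_pos pi_pos]
    nlinarith [pi_pos]
  have h3 := mul_abs_le_abs_sin h2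
  rw [abs_mul, abs_of_pos pi_pos] at h3
  have h4 : 2 / π * (π * |t|) = 2 * |t| := by field_simp
  rw [h1]; linarith

lemma integral_e_int_mul (m : ℤ) :
    ∫ t in (-(1 / 2) : ℝ)..(1 / 2), e (m * t) = if m = 0 then 1 else 0 := by
  split_ifs with hm
  · simp only [hm, Int.cast_zero, zero_mul, e_zero, intervalIntegral.integral_const]
    norm_num
  · have hc : (2 * π * Complex.I * m : ℂ) ≠ 0 := by
      simp [hm, pi_ne_zero]
    have h1 : ∀ t : ℝ, e (m * t) = Complex.exp ((2 * π * Complex.I * m) * t) := fun t => by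
      rw [e]; congr 1; push_cast; ring
    simp_rw [h1]
    rw [integral_exp_mul_complex hc, div_eq_zero_iff]
    left
    rw [sub_eq_zero, Complex.exp_eq_exp_iff_exists_int]
    exact ⟨m, by push_cast; ring⟩

/-- The unnormalised Fejér kernel `∑_{i, j < N} e((i - j) t) = |∑_{i < N} e(it)|²`. -/
noncomputable def fejer (N : ℕ) (t : ℝ) : ℂ :=
  ∑ i ∈ Finset.range N, ∑ j ∈ Finset.range N, e ((i - j : ℤ) * t)

lemma continuous_fejer (N : ℕ) : Continuous (fejer N) := by
  have := continuous_e
  unfold fejer; fun_prop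

lemma fejer_eq (N : ℕ) (t : ℝ) :
    fejer N t = (∑ i ∈ Finset.range N, e t ^ i) *
      (starRingEnd ℂ) (∑ i ∈ Finset.range N, e t ^ i) := by
  rw [map_sum, Finset.sum_mul_sum, fejer]
  refine Finset.sum_congr rfl fun i _ => Finset.sum_congr rfl fun j _ => ?_
  rw [← e_nat_mul, ← e_nat_mul, conj_e, ← e_add]
  congr 1; push_cast; ring

lemma norm_fejer_mul_le (N : ℕ) {t : ℝ} (ht : |t| ≤ 1 / 2) :
    ‖fejer N t‖ * (1 + N ^ 2 * t ^ 2) ≤ 2 * N ^ 2 := by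
  set D := ∑ i ∈ Finset.range N, e t ^ i with hD
  have h0 : ‖fejer N t‖ = ‖D‖ ^ 2 := by
    rw [fejer_eq, norm_mul, RCLike.norm_conj, sq]
  have h1 : ‖D‖ ≤ N := by
    refine (norm_sum_le _ _).trans ?_
    simp [norm_e]
  have h2 : ‖D‖ * (4 * |t|) ≤ 2 := by
    calc ‖D‖ * (4 * |t|) ≤ ‖D‖ * ‖e t - 1‖ := by
          gcongr; exact four_mul_abs_le_norm_e_sub_one ht
      _ = ‖e t ^ N - 1‖ := by rw [← norm_mul, hD, geom_sum_mul]
      _ ≤ ‖e t ^ N‖ + ‖(1 : ℂ)‖ := norm_sub_le _ _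
      _ = 2 := by rw [norm_pow, norm_e]; norm_num
  have h3 : ‖D‖ ^ 2 ≤ N ^ 2 := by gcongr
  have h4 : ‖D‖ ^ 2 * t ^ 2 ≤ 1 := by
    rw [← sq_abs t, ← mul_pow]
    exact pow_le_one₀ (by positivity) (by linarith)
  rw [h0]
  nlinarith [sq_nonneg (N : ℝ)]

lemma integral_e_mul_fejer (N : ℕ) (m : ℤ) :
    ∫ t in (-(1 / 2) : ℝ)..(1 / 2), e (m * t) * fejer N t =
      ∑ i ∈ Finset.range N, ∑ j ∈ Finset.range N, if m + (i - j) = 0 then 1 else 0 := by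
  have hc := continuous_e
  simp_rw [fejer, Finset.mul_sum]
  rw [intervalIntegral.integral_finsetSum
    fun i _ => Continuous.intervalIntegrable (by fun_prop) _ _]
  refine Finset.sum_congr rfl fun i _ => ?_
  rw [intervalIntegral.integral_finsetSum
    fun j _ => Continuous.intervalIntegrable (by fun_prop) _ _]
  refine Finset.sum_congr rfl fun j _ => ?_
  rw [← integral_e_int_mul]
  congr 1; ext t
  rw [← e_add]; congr 1; push_cast; ring

lemma integral_fejer (N : ℕ) :
    ∫ t in (-(1 / 2) : ℝ)..(1 / 2), e ((0 : ℤ) * t) * fejer N t = N := by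
  rw [integral_e_mul_fejer]
  have : ∀ i ∈ Finset.range N, (∑ j ∈ Finset.range N,
      if (0 : ℤ) + (i - j) = 0 then (1 : ℂ) else 0) = 1 := by
    intro i hi
    rw [Finset.sum_eq_single i]
    · simp
    · intro j _ hj; rw [if_neg]; omega
    · exact fun h => absurd hi h
  rw [Finset.sum_congr rfl this]; simp

lemma integral_e_mul_fejer_eq_zero {N : ℕ} {m : ℤ} (hm : (N : ℤ) ≤ |m|) :
    ∫ t in (-(1 / 2) : ℝ)..(1 / 2), e (m * t) * fejer N t = 0 := by
  rw [integral_e_mul_fejer]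
  refine Finset.sum_eq_zero fun i hi => Finset.sum_eq_zero fun j hj => if_neg ?_
  rw [Finset.mem_range] at hi hj
  rcases abs_cases m with h | h <;> omega

lemma integral_abs_mul_div (N : ℕ) :
    ∫ t in (-(1 / 2) : ℝ)..(1 / 2), |t| * (2 * N ^ 2 / (1 + N ^ 2 * t ^ 2)) =
      2 * log (1 + N ^ 2 / 4) := by
  have hpos : ∀ t : ℝ, 0 < 1 + (N : ℝ) ^ 2 * t ^ 2 := fun t => by positivity
  have hc : Continuous fun t : ℝ => 2 * (N : ℝ) ^ 2 / (1 + N ^ 2 * t ^ 2) :=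
    continuous_const.div (by fun_prop) fun t => (hpos t).ne'
  have hcabs : Continuous fun t : ℝ => |t| * (2 * (N : ℝ) ^ 2 / (1 + N ^ 2 * t ^ 2)) :=
    continuous_abs.mul hc
  have hI : ∀ a b : ℝ, ∫ t in a..b, t * (2 * N ^ 2 / (1 + N ^ 2 * t ^ 2)) =
      log (1 + N ^ 2 * b ^ 2) - log (1 + N ^ 2 * a ^ 2) := by
    intro a b
    refine intervalIntegral.integral_eq_sub_of_hasDerivAt
      (f := fun t : ℝ => log (1 + (N : ℝ) ^ 2 * t ^ 2)) (fun t _ => ?_)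
      ((continuous_id.mul hc).intervalIntegrable _ _)
    have h := (((hasDerivAt_pow 2 t).const_mul ((N : ℝ) ^ 2)).const_add 1).log (hpos t).ne'
    exact h.congr_deriv (by push_cast; ring)
  rw [← intervalIntegral.integral_add_adjacent_intervals (b := 0)
    (hcabs.intervalIntegrable _ _) (hcabs.intervalIntegrable _ _)]
  have hneg : ∫ t in (-(1 / 2) : ℝ)..0, |t| * (2 * N ^ 2 / (1 + N ^ 2 * t ^ 2)) =
      ∫ t in (-(1 / 2) : ℝ)..0, -(t * (2 * N ^ 2 / (1 + N ^ 2 * t ^ 2))) := by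
    refine intervalIntegral.integral_congr fun t ht => ?_
    rw [Set.uIcc_of_le (by norm_num)] at ht
    simp only [abs_of_nonpos ht.2, neg_mul]
  have hnonneg : ∫ t in (0 : ℝ)..(1 / 2), |t| * (2 * N ^ 2 / (1 + N ^ 2 * t ^ 2)) =
      ∫ t in (0 : ℝ)..(1 / 2), t * (2 * N ^ 2 / (1 + N ^ 2 * t ^ 2)) := by
    refine intervalIntegral.integral_congr fun t ht => ?_
    rw [Set.uIcc_of_le (by norm_num)] at ht
    simp only [abs_of_nonneg ht.1]
  rw [hneg, hnonneg, intervalIntegral.integral_neg, hI, hI]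
  have h4 : (N : ℝ) ^ 2 * (1 / 2) ^ 2 = N ^ 2 / 4 := by ring
  have h4' : (N : ℝ) ^ 2 * (-(1 / 2)) ^ 2 = N ^ 2 / 4 := by ring
  rw [h4, h4']
  simp only [ne_eq, OfNat.ofNat_ne_zero, not_false_eq_true, zero_pow, mul_zero, add_zero, log_one]
  ring

/-- If a function is Lipschitz at a point, a coefficient of its Fourier series whose frequency is
`N`-isolated (from `0` too) is `O(log N / N)`. -/
lemma norm_coeff_mul_le {c : ℕ → ℂ} (hc : Summable fun n => ‖c n‖) {lam : ℕ → ℤ}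
    {x₀ K : ℝ} (hK : ∀ t : ℝ, |t| ≤ 1 / 2 →
      ‖(∑' n, c n * e (lam n * (x₀ + t))) - ∑' n, c n * e (lam n * x₀)‖ ≤ K * |t|)
    {k N : ℕ} (hk : (N : ℤ) ≤ |lam k|) (hN : ∀ n ≠ k, (N : ℤ) ≤ |lam n - lam k|) :
    ‖c k‖ * N ≤ K * (2 * log (1 + N ^ 2 / 4)) := by
  have he := continuous_e
  have hf := continuous_fejer N
  set S := ∑' n, c n * e (lam n * x₀) with hS
  set g : ℝ → ℂ := fun t => ∑' n, c n * e (lam n * (x₀ + t)) with hg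
  have hsum : ∀ t : ℝ, Summable fun n => c n * e (lam n * (x₀ + t)) := fun t =>
    Summable.of_norm (by simpa only [norm_mul, norm_e, mul_one] using hc)
  have hgc : Continuous g :=
    continuous_tsum (fun n => by fun_prop) hc fun n t => by rw [norm_mul, norm_e, mul_one]
  set ker : ℝ → ℂ := fun t => e ((-lam k : ℤ) * t) * fejer N t with hker
  have hkc : Continuous ker := by fun_prop
  have hterm : ∀ n, ∫ t in (-(1 / 2) : ℝ)..(1 / 2), c n * e (lam n * (x₀ + t)) * ker t =
      if n = k then c k * e (lam k * x₀) * N else 0 := by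
    intro n
    have h1 : ∀ t : ℝ, c n * e (lam n * (x₀ + t)) * ker t =
        c n * e (lam n * x₀) * (e ((lam n - lam k : ℤ) * t) * fejer N t) := by
      intro t
      have h2 : e ((lam n - lam k : ℤ) * t) = e (lam n * t) * e ((-lam k : ℤ) * t) := by
        rw [← e_add]; congr 1; push_cast; ring
      rw [h2, mul_add, e_add, hker]; ring
    simp_rw [h1]
    rw [intervalIntegral.integral_const_mul]
    split_ifs with h
    · subst h; rw [sub_self, integral_fejer]
    · rw [integral_e_mul_fejer_eq_zero (hN n h), mul_zero]
  have hint : ∫ t in (-(1 / 2) : ℝ)..(1 / 2), g t * ker t = c k * e (lam k * x₀) * N := by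
    obtain ⟨B, hB⟩ := isCompact_Icc.exists_bound_of_continuousOn
      (s := Set.Icc (-(1 / 2) : ℝ) (1 / 2)) hkc.continuousOn
    have h1 := intervalIntegral.hasSum_integral_of_dominated_convergence
      (μ := MeasureTheory.volume) (a := -(1 / 2)) (b := 1 / 2)
      (F := fun n t => c n * e (lam n * (x₀ + t)) * ker t) (f := fun t => g t * ker t)
      (fun n _ => ‖c n‖ * B) (fun n => Continuous.aestronglyMeasurable (by fun_prop))
      (fun n => Filter.Eventually.of_forall fun t ht => by
        rw [Set.uIoc_of_le (by norm_num)] at ht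
        rw [norm_mul, norm_mul, norm_e, mul_one]
        gcongr
        exact hB t ⟨ht.1.le, ht.2⟩)
      (Filter.Eventually.of_forall fun t _ => hc.mul_right B)
      (by simp)
      (Filter.Eventually.of_forall fun t _ => (hsum t).hasSum.mul_right _)
    simp_rw [hterm] at h1
    exact h1.unique (hasSum_ite_eq k _)
  have hzero : ∫ t in (-(1 / 2) : ℝ)..(1 / 2), S * ker t = 0 := by
    rw [intervalIntegral.integral_const_mul,
      integral_e_mul_fejer_eq_zero (by rwa [abs_neg]), mul_zero]
  have hdiff : ∫ t in (-(1 / 2) : ℝ)..(1 / 2), (g t - S) * ker t = c k * e (lam k * x₀) * N := by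
    simp_rw [sub_mul]
    rw [intervalIntegral.integral_sub (Continuous.intervalIntegrable (by fun_prop) _ _)
      (Continuous.intervalIntegrable (by fun_prop) _ _), hint, hzero, sub_zero]
  have hpos : ∀ t : ℝ, 0 < 1 + (N : ℝ) ^ 2 * t ^ 2 := fun t => by positivity
  have hbc : Continuous fun t : ℝ => K * (|t| * (2 * (N : ℝ) ^ 2 / (1 + N ^ 2 * t ^ 2))) :=
    continuous_const.mul (continuous_abs.mul
      (continuous_const.div (by fun_prop) fun t => (hpos t).ne'))
  calc ‖c k‖ * N = ‖∫ t in (-(1 / 2) : ℝ)..(1 / 2), (g t - S) * ker t‖ := by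
        rw [hdiff, norm_mul, norm_mul, norm_e, mul_one, Complex.norm_natCast]
    _ ≤ ∫ t in (-(1 / 2) : ℝ)..(1 / 2), K * (|t| * (2 * N ^ 2 / (1 + N ^ 2 * t ^ 2))) := by
        refine intervalIntegral.norm_integral_le_of_norm_le (by norm_num)
          (Filter.Eventually.of_forall fun t ht => ?_) (hbc.intervalIntegrable _ _)
        have ht' : |t| ≤ 1 / 2 := abs_le.2 ⟨ht.1.le, ht.2⟩
        have hfe : ‖fejer N t‖ ≤ 2 * N ^ 2 / (1 + N ^ 2 * t ^ 2) :=
          (le_div_iff₀ (hpos t)).2 (norm_fejer_mul_le N ht')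
        rw [norm_mul, norm_mul, norm_e, one_mul, ← mul_assoc]
        exact mul_le_mul (hK t ht') hfe (norm_nonneg _) ((norm_nonneg _).trans (hK t ht'))
    _ = K * (2 * log (1 + N ^ 2 / 4)) := by
        rw [intervalIntegral.integral_const_mul, integral_abs_mul_div]

lemma card_divisors_le_two_mul_sqrt (n : ℕ) : n.divisors.card ≤ 2 * n.sqrt := by
  have hsub : n.divisors ⊆
      Finset.Icc 1 n.sqrt ∪ (Finset.Icc 1 n.sqrt).image fun d => n / d := by
    intro d hd
    obtain ⟨⟨m, rfl⟩, hn⟩ := Nat.mem_divisors.1 hd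
    have hd0 : 0 < d := Nat.pos_of_ne_zero fun h => hn (by simp [h])
    have hm0 : 0 < m := Nat.pos_of_ne_zero fun h => hn (by simp [h])
    rw [Finset.mem_union, Finset.mem_image]
    rcases le_total d m with h | h
    · exact Or.inl (Finset.mem_Icc.2 ⟨hd0, Nat.le_sqrt.2 (Nat.mul_le_mul_left d h)⟩)
    · exact Or.inr ⟨m, Finset.mem_Icc.2 ⟨hm0, Nat.le_sqrt.2 (Nat.mul_le_mul_right m h)⟩,
        Nat.mul_div_cancel _ hm0⟩
  refine (Finset.card_le_card hsub).trans ((Finset.card_union_le _ _).trans ?_)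
  have := Finset.card_image_le (s := Finset.Icc 1 n.sqrt) (f := fun d => n / d)
  rw [Nat.card_Icc] at *
  omega

lemma pow_card_primeFactors_le_card_divisors {P : ℕ} (hP : P ≠ 0) (m : ℕ) :
    (m + 1) ^ P.primeFactors.card ≤ (P ^ m).divisors.card := by
  rcases Nat.eq_zero_or_pos m with rfl | hm
  · simp
  rw [Nat.card_divisors (pow_ne_zero m hP), Nat.primeFactors_pow _ hm.ne', ← Finset.prod_const]
  refine Finset.prod_le_prod' fun q hq => ?_
  have h1 : 1 ≤ P.factorization q := (Nat.prime_of_mem_primeFactors hq).factorization_pos_of_dvd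
    hP (Nat.dvd_of_mem_primeFactors hq)
  rw [Nat.factorization_pow]
  simpa using Nat.le_mul_of_pos_right m h1

/-- The divisor function is not bounded by any power of the logarithm. -/
lemma exists_mul_log_pow_lt_card_divisors (k : ℕ) (K : ℝ) :
    ∃ n : ℕ, 2 ≤ n ∧ K * log n ^ k < n.divisors.card := by
  obtain ⟨s, hs, hcard⟩ := Nat.infinite_setOfPred_prime.exists_subset_card_eq (k + 1)
  have hprime : ∀ p ∈ s, p.Prime := fun p hp => hs hp
  set P := ∏ p ∈ s, p with hPdef
  have hP0 : P ≠ 0 := Finset.prod_ne_zero_iff.2 fun p hp => (hprime p hp).ne_zero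
  have hPf : P.primeFactors.card = k + 1 := by
    rw [hPdef, Nat.primeFactors_prod hprime, hcard]
  have hP2 : 2 ≤ P := by
    rcases Nat.lt_or_ge P 2 with h | h
    · have : P = 1 := by omega
      rw [this] at hPf; simp at hPf
    · exact h
  obtain ⟨m, hm⟩ := exists_nat_gt (K * log P ^ k)
  refine ⟨P ^ (m + 1), hP2.trans (Nat.le_self_pow (by omega) P), ?_⟩
  have h1 : ((m + 1 + 1 : ℕ) : ℝ) ^ (k + 1) ≤ ((P ^ (m + 1)).divisors.card : ℝ) := by
    have := pow_card_primeFactors_le_card_divisors hP0 (m + 1)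
    rw [hPf] at this
    exact_mod_cast this
  refine lt_of_lt_of_le ?_ h1
  rw [Nat.cast_pow, log_pow, mul_pow, pow_succ, mul_left_comm]
  push_cast
  have h2 : (0 : ℝ) < ((m : ℝ) + 1) ^ k := by positivity
  calc ((m : ℝ) + 1) ^ k * (K * log P ^ k) < ((m : ℝ) + 1) ^ k * m := by gcongr
    _ ≤ ((m : ℝ) + 1 + 1) ^ k * ((m : ℝ) + 1 + 1) := by
        gcongr <;> linarith

lemma sq_le_abs_cube_sub_cube {p q : ℤ} (hp : 0 ≤ p) (hq : 0 ≤ q) (hpq : q ≠ p) :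
    p ^ 2 ≤ |q ^ 3 - p ^ 3| := by
  have h1 : 1 ≤ |q - p| := Int.one_le_abs (sub_ne_zero.2 hpq)
  have h2 : q ^ 3 - p ^ 3 = (q - p) * (q ^ 2 + q * p + p ^ 2) := by ring
  rw [h2, abs_mul, abs_of_nonneg (a := q ^ 2 + q * p + p ^ 2) (by positivity)]
  nlinarith [mul_nonneg hq hp, sq_nonneg q, sq_nonneg p]

/-- The coefficient of `e(pₙ₊₂³ x)` in `F`. -/
noncomputable def coeffF (n : ℕ) : ℝ :=
  (n + 2).divisors.card / (((n : ℝ) + 2) ^ 2 * log ((n : ℝ) + 2) ^ 2023)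

lemma log_add_two_pos (n : ℕ) : 0 < log ((n : ℝ) + 2) :=
  log_pos (by have : (0 : ℝ) ≤ n := n.cast_nonneg
              linarith)

lemma coeffF_nonneg (n : ℕ) : 0 ≤ coeffF n := by
  have := log_add_two_pos n
  unfold coeffF; positivity

lemma summable_coeffF : Summable coeffF := by
  have h1 : Summable fun n : ℕ => 2 / log 2 ^ 2023 * (1 / ((n + 2 : ℕ) : ℝ) ^ (3 / 2 : ℝ)) :=
    ((summable_nat_add_iff 2).2
      (Real.summable_one_div_nat_rpow.2 (by norm_num : (1 : ℝ) < 3 / 2))).mul_left _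
  refine h1.of_nonneg_of_le coeffF_nonneg fun n => ?_
  have hn : (0 : ℝ) < (n : ℝ) + 2 := by positivity
  have h2 : ((n + 2).divisors.card : ℝ) ≤ 2 * ((n : ℝ) + 2) ^ (1 / 2 : ℝ) := by
    rw [← Real.sqrt_eq_rpow]
    have h3 : ((n + 2).divisors.card : ℝ) ≤ 2 * ((n + 2).sqrt : ℝ) := by
      exact_mod_cast card_divisors_le_two_mul_sqrt (n + 2)
    have h4 := Real.nat_sqrt_le_real_sqrt (a := n + 2)
    push_cast at h4
    linarith
  have hlog2 : 0 < log 2 := log_pos (by norm_num)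
  have h5 : log 2 ≤ log ((n : ℝ) + 2) :=
    log_le_log (by norm_num) (by linarith [n.cast_nonneg (α := ℝ)])
  have h6 : ((n : ℝ) + 2) ^ 2 = ((n : ℝ) + 2) ^ (1 / 2 : ℝ) * ((n : ℝ) + 2) ^ (3 / 2 : ℝ) := by
    rw [← Real.rpow_add hn, ← Real.rpow_natCast]; norm_num
  calc coeffF n ≤ 2 * ((n : ℝ) + 2) ^ (1 / 2 : ℝ) / (((n : ℝ) + 2) ^ 2 * log 2 ^ 2023) := by
        unfold coeffF; gcongr
    _ = 2 / log 2 ^ 2023 * (1 / ((n + 2 : ℕ) : ℝ) ^ (3 / 2 : ℝ)) := by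
        rw [h6]; push_cast
        have : ((n : ℝ) + 2) ^ (1 / 2 : ℝ) ≠ 0 := by positivity
        generalize log 2 ^ 2023 = L
        field_simp

lemma F_eq_tsum (x : ℝ) :
    F x = ∑' n, (coeffF n : ℂ) * e (((Nat.nth Nat.Prime (n + 1) : ℤ) ^ 3 : ℤ) * x) := by
  rw [F]
  refine tsum_congr fun n => ?_
  rw [coeffF]
  push_cast
  exact mul_div_right_comm _ _ _

lemma norm_F_le (x : ℝ) : ‖F x‖ ≤ ∑' n, coeffF n := by
  rw [F_eq_tsum]
  refine tsum_of_norm_bounded summable_coeffF.hasSum fun n => ?_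
  rw [norm_mul, norm_e, mul_one, Complex.norm_of_nonneg (coeffF_nonneg n)]

lemma card_divisors_le_of_lipschitz_at {x₀ K : ℝ}
    (hK : ∀ t : ℝ, |t| ≤ 1 / 2 → ‖F (x₀ + t) - F x₀‖ ≤ K * |t|) (n : ℕ) :
    ((n + 2).divisors.card : ℝ) ≤ 8 * K * log ((n : ℝ) + 2) ^ 2024 := by
  simp_rw [F_eq_tsum] at hK
  have hK0 : 0 ≤ K := by
    have := (norm_nonneg _).trans (hK (1 / 2) (by norm_num [abs_of_pos]))
    rw [abs_of_pos (by norm_num)] at this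
    linarith
  have hp : ((n : ℤ) + 2) ≤ Nat.nth Nat.Prime (n + 1) := by
    have := Nat.add_two_le_nth_prime (n + 1)
    omega
  set p := ((Nat.nth Nat.Prime (n + 1) : ℕ) : ℤ) with hpdef
  have hsq : (((n + 2) ^ 2 : ℕ) : ℤ) ≤ p ^ 2 := by
    push_cast; gcongr
  have key := norm_coeff_mul_le (k := n) (N := (n + 2) ^ 2)
    (c := fun n => (coeffF n : ℂ)) (by
      simpa only [Complex.norm_of_nonneg (coeffF_nonneg _)] using summable_coeffF) hK
    (by
      rw [← hpdef, abs_of_nonneg (by positivity)]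
      refine hsq.trans (pow_le_pow_right₀ (by omega) (by norm_num)))
    (fun m hm => hsq.trans (sq_le_abs_cube_sub_cube (by omega) (by positivity) fun h => hm (by
      have := Nat.nth_injective Nat.infinite_setOfPred_prime (Nat.cast_injective h)
      omega)))
  rw [Complex.norm_of_nonneg (coeffF_nonneg n), coeffF] at key
  push_cast at key
  have hn : (2 : ℝ) ≤ (n : ℝ) + 2 := by linarith [n.cast_nonneg (α := ℝ)]
  have hL := log_add_two_pos n
  set y : ℝ := (n : ℝ) + 2 with hy
  have hlog : log (1 + (y ^ 2) ^ 2 / 4) ≤ 4 * log y := by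
    have h1 : 4 * log y = log (y ^ 4) := by rw [log_pow]; norm_num
    rw [h1]
    have h2 : (4 : ℝ) ≤ y ^ 2 := by nlinarith
    refine log_le_log (by positivity) (by nlinarith)
  have h3 : ((n + 2).divisors.card : ℝ) / (y ^ 2 * log y ^ 2023) * y ^ 2 =
      (n + 2).divisors.card / log y ^ 2023 := by
    generalize log y ^ 2023 = L
    have : y ≠ 0 := by positivity
    field_simp
  rw [h3, div_le_iff₀ (by positivity)] at key
  refine key.trans ?_
  rw [pow_succ (log y) 2023]
  have h4 : 0 < log y ^ 2023 := by positivity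
  generalize log y ^ 2023 = L at *
  calc K * (2 * log (1 + (y ^ 2) ^ 2 / 4)) * L ≤ K * (2 * (4 * log y)) * L := by gcongr
    _ = 8 * K * (L * log y) := by ring

lemma not_lipschitz_at (x₀ : ℝ) :
    ¬ ∃ C > (0:ℝ), ∃ δ > (0:ℝ), ∀ x : ℝ, |x - x₀| < δ → ‖F x - F x₀‖ ≤ C * |x - x₀| := by
  rintro ⟨C, hC, δ, hδ, h⟩
  set M := ∑' n, coeffF n
  have hM : 0 ≤ M := tsum_nonneg coeffF_nonneg
  have hK : ∀ t : ℝ, |t| ≤ 1 / 2 → ‖F (x₀ + t) - F x₀‖ ≤ (C + 2 * M / δ) * |t| := by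
    intro t _
    rcases lt_or_ge |t| δ with ht | ht
    · have h1 := h (x₀ + t) (by rwa [add_sub_cancel_left])
      rw [add_sub_cancel_left] at h1
      have : 0 ≤ 2 * M / δ * |t| := by positivity
      linarith
    · have h1 : ‖F (x₀ + t) - F x₀‖ ≤ 2 * M := by
        have := norm_sub_le (F (x₀ + t)) (F x₀)
        linarith [norm_F_le (x₀ + t), norm_F_le x₀]
      have h2 : 2 * M = 2 * M / δ * δ := by field_simp
      have h3 : 2 * M / δ * δ ≤ 2 * M / δ * |t| := by gcongr
      have : 0 ≤ C * |t| := by positivity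
      linarith
  obtain ⟨n, hn, hlt⟩ := exists_mul_log_pow_lt_card_divisors 2024 (8 * (C + 2 * M / δ))
  obtain ⟨m, rfl⟩ := Nat.exists_eq_add_of_le' hn
  have := card_divisors_le_of_lipschitz_at hK m
  push_cast at hlt
  exact absurd this (not_le.2 hlt)

theorem F_nowhere_Lipschitz_nowhere_differentiable :
    ∀ x₀ : ℝ,
      (¬ ∃ C > (0:ℝ), ∃ δ > (0:ℝ), ∀ x : ℝ, |x - x₀| < δ → ‖F x - F x₀‖ ≤ C * |x - x₀|) ∧
      ¬ DifferentiableAt ℝ F x₀ := by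
  refine fun x₀ => ⟨not_lipschitz_at x₀, fun hd => not_lipschitz_at x₀ ?_⟩
  obtain ⟨C, hC, hbound⟩ := hd.isBigO_sub.exists_pos
  obtain ⟨δ, hδ, hball⟩ := Metric.eventually_nhds_iff.1 hbound.bound
  exact ⟨C, hC, δ, hδ, fun x hx => hball hx⟩
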